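/- Let X and Y be finite nonempty alphabets, P_X a probability mass function on X with P_X(x) > 0 for all x, and W a channel with W(y|x) > 0 for all x, y and Σ_y W(y|x) = 1 for each x, and fix R ∈ ℝ. Suppose that for every ρ ∈ [0,1] there exists a vector Z_ρ : X → (0,∞) satisfying Z_ρ(x) = Σ_y W(y|x)^{1/(1+ρ)} [ Σ_{x'} P_X(x') W(y|x')^{1/(1+ρ)} / Z_ρ(x') ]^ρ for all x ∈ X. Define U(x|y,ρ) = ( P_X(x) W(y|x)^{1/(1+ρ)} / Z_ρ(x) ) / ( Σ_{x'} P_X(x') W(y|x')^{1/(1+ρ)} / Z_ρ(x') ), and U_θ(x|y,ρ) = U(x|y,ρ)^θ / Σ_{x'} U(x'|y,ρ)^θ for θ ≥ 0, and let ρ* ∈ [0,1] maximize ρ ↦ sup_{θ≥0} { −Σ_x P_X(x) log₂( Σ_y W(y|x) / U_θ(x|y,ρ)^ρ ) + ρ(H(P_X) − R) }. Then max_{ρ∈[0,1]} sup_{θ≥0} { −Σ_x P_X(x) log₂( Σ_y W(y|x) / U_θ(x|y,ρ*)^ρ ) + ρ(H(P_X) − R) } = min over channels Q of { D(Q‖W|P_X)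 + [ I_Q(X;Y) − R ]_+ }; i.e., the metric U_*(x,y) = U(x|y,ρ*) achieves the random coding error exponent of constant composition codes. -/

import Mathlib

/-- Base-2 entropy of a probability mass function on a finite alphabet. -/
noncomputable def entropy2 {X : Type*} [Fintype X] (P : X → ℝ) : ℝ :=
  -∑ x, P x * Real.logb 2 (P x)

/-- The normalized metric `U_θ(x|y) = U(x,y)^θ / Σ_{x'} U(x',y)^θ`. -/
noncomputable def Utheta {X Y : Type*} [Fintype X] (U : X → Y → ℝ) (θ : ℝ)
    (x : X) (y : Y) : ℝ :=
  U x y ^ θ / ∑ x', U x' y ^ θ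

/-- Weighted conditional divergence `D(Q‖W|P_X)` (base-2 logarithm). -/
noncomputable def condDiv2 {X Y : Type*} [Fintype X] [Fintype Y]
    (P : X → ℝ) (Q W : X → Y → ℝ) : ℝ :=
  ∑ x, P x * ∑ y, Q x y * Real.logb 2 (Q x y / W x y)

/-- Mutual information `I_Q(X;Y)` of the joint distribution `P_X(x) Q(y|x)` (base 2). -/
noncomputable def mutInfo2 {X Y : Type*} [Fintype X] [Fintype Y]
    (P : X → ℝ) (Q : X → Y → ℝ) : ℝ :=
  ∑ x, ∑ y, P x * Q x y * Real.logb 2 (Q x y / ∑ x', P x' * Q x' y)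

/-- The metric `U(x|y,ρ) = (P_X(x) W(y|x)^{1/(1+ρ)}/Z(x)) / Σ_{x'} P_X(x') W(y|x')^{1/(1+ρ)}/Z(x')`. -/
noncomputable def Uopt {X Y : Type*} [Fintype X] (P : X → ℝ) (W : X → Y → ℝ)
    (Z : X → ℝ) (ρ : ℝ) (x : X) (y : Y) : ℝ :=
  (P x * W x y ^ (1 / (1 + ρ)) / Z x) /
    ∑ x', P x' * W x' y ^ (1 / (1 + ρ)) / Z x'

/-!
For a channel `Q` and a metric `V` whose columns `V(·|y)` are probability vectors, the objective
`D(Q‖W|P) + ρ (I_Q - R)` equals `ρ (H(P) - R)` plus two relative entropies: that of `Q` from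
`W / V ^ ρ`, and `ρ` times that of `P Q` from `V` times the output distribution of `Q`. By the
log-sum inequality the exponent of `V` at `ρ` is therefore a lower bound for every `Q`, with
equality iff `Q(·|x) ∝ W(·|x) / V(x|·) ^ ρ` and (for `ρ > 0`) `V` is the posterior of `Q`. The fixed
point equation says exactly that `V = U(·|·, ρ)` admits such a `Q`. As both `D` and `I` are convex
in `Q`, a single `ρ ∈ [0, 1]` makes `D + ρ (I - R)` at least `min_Q (D + [I - R]₊)` for all `Q`, so
this minimum is at most the exponent of `U(·|·, ρ)` at `ρ`, hence at most that of `U(·|·, ρ*)` at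
`ρ*`.
-/

open Finset

section Alternative

variable {ι E : Type*} [Fintype ι] [Nonempty ι]

theorem exists_mem_stdSimplex_forall_sum_mul_lt {K : Set (ι → ℝ)} (hconv : Convex ℝ K)
    (hopen : IsOpen K) (hupper : IsUpperSet K) {p : ι → ℝ} (hp : p ∉ K) :
    ∃ w ∈ stdSimplex ℝ ι, ∀ q ∈ K, ∑ i, w i * p i < ∑ i, w i * q i := by
  classical
  obtain rfl | ⟨q₀, hq₀⟩ := K.eq_empty_or_nonempty
  · exact ⟨_, single_mem_stdSimplex ℝ (Classical.arbitrary ι), by simp⟩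
  obtain ⟨φ, hφ⟩ := geometric_hahn_banach_point_open hconv hopen hp
  set c : ι → ℝ := fun i ↦ φ (Pi.single i 1)
  have φ_eq (q : ι → ℝ) : φ q = ∑ i, c i * q i := by
    conv_lhs => rw [← univ_sum_single q, map_sum]
    refine sum_congr rfl fun i _ ↦ ?_
    rw [mul_comm, ← smul_eq_mul, ← map_smul, ← Pi.single_smul, smul_eq_mul, mul_one]
  have c_nonneg (j : ι) : 0 ≤ c j := by
    by_contra! hj
    -- moving from `q₀` along `j` stays in the upper set `K` but lowers `φ` to `φ p`
    set t := (φ q₀ - φ p) / -c j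
    have ht : 0 ≤ t := div_nonneg (sub_nonneg.2 (hφ q₀ hq₀).le) (neg_nonneg.2 hj.le)
    have hmem : q₀ + t • Pi.single j 1 ∈ K :=
      hupper (le_add_of_nonneg_right (smul_nonneg ht (Pi.single_nonneg.2 zero_le_one))) hq₀
    have htc : t * c j = φ p - φ q₀ := by simp only [t]; field_simp [hj.ne]; ring
    have hlt := hφ _ hmem
    rw [map_add, map_smul, smul_eq_mul, htc] at hlt
    linarith
  have sum_pos : 0 < ∑ i, c i := by
    refine (sum_nonneg fun i _ ↦ c_nonneg i).lt_of_ne' fun h ↦ (hφ q₀ hq₀).ne ?_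
    have hc (i : ι) : c i = 0 := (sum_eq_zero_iff_of_nonneg fun i _ ↦ c_nonneg i).1 h i (mem_univ i)
    simp [φ_eq, hc]
  refine ⟨fun i ↦ c i / ∑ j, c j, ⟨fun i ↦ div_nonneg (c_nonneg i) sum_pos.le, ?_⟩, fun q hq ↦ ?_⟩
  · rw [← sum_div, div_self sum_pos.ne']
  · simp only [div_mul_eq_mul_div, ← sum_div, ← φ_eq]
    exact div_lt_div_of_pos_right (hφ q hq) sum_pos

variable [AddCommGroup E] [Module ℝ E]

theorem exists_mem_stdSimplex_forall_le_sum_mul {C : Set E} {f : ι → E → ℝ}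
    (hf : ∀ i, ConvexOn ℝ C (f i)) {v : ℝ} (hv : ∀ x ∈ C, ∃ i, v ≤ f i x) :
    ∃ w ∈ stdSimplex ℝ ι, ∀ x ∈ C, v ≤ ∑ i, w i * f i x := by
  set K : Set (ι → ℝ) := ⋃ x ∈ C, Set.univ.pi fun i ↦ Set.Ioi (f i x)
  have mem_K {q : ι → ℝ} : q ∈ K ↔ ∃ x ∈ C, ∀ i, f i x < q i := by simp [K]
  have hopen : IsOpen K := isOpen_biUnion fun x _ ↦
    isOpen_set_pi Set.finite_univ fun i _ ↦ isOpen_Ioi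
  have hupper : IsUpperSet K := fun q q' hqq' hq ↦ by
    obtain ⟨x, hx, hlt⟩ := mem_K.1 hq
    exact mem_K.2 ⟨x, hx, fun i ↦ (hlt i).trans_le (hqq' i)⟩
  have hconv : Convex ℝ K := fun q hq q' hq' l m hl hm hlm ↦ by
    obtain ⟨x, hx, hlt⟩ := mem_K.1 hq
    obtain ⟨x', hx', hlt'⟩ := mem_K.1 hq'
    have combo (i : ι) := ((hf i).convex_strict_epigraph
      (show (x, q i) ∈ _ from ⟨hx, hlt i⟩) (show (x', q' i) ∈ _ from ⟨hx', hlt' i⟩) hl hm hlm)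
    exact mem_K.2 ⟨_, (combo (Classical.arbitrary ι)).1, fun i ↦ (combo i).2⟩
  have hv_notMem : (fun _ ↦ v) ∉ K := fun h ↦ by
    obtain ⟨x, hx, hlt⟩ := mem_K.1 h
    obtain ⟨i, hi⟩ := hv x hx
    exact (hlt i).not_ge hi
  obtain ⟨w, hw, hsep⟩ := exists_mem_stdSimplex_forall_sum_mul_lt hconv hopen hupper hv_notMem
  refine ⟨w, hw, fun x hx ↦ le_of_forall_pos_le_add fun ε hε ↦ ?_⟩
  have hlt := hsep (fun i ↦ f i x + ε) (mem_K.2 ⟨x, hx, fun i ↦ lt_add_of_pos_right _ hε⟩)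
  simp only [mul_add, sum_add_distrib, ← sum_mul, hw.2, one_mul] at hlt
  exact hlt.le

end Alternative

section RelativeEntropy

variable {ι : Type*} [Fintype ι]

/-- Base-2 relative entropy of two nonnegative vectors, not necessarily normalized.
A term with `b i = 0` contributes `0`, so this is the usual relative entropy only if
`b i = 0 → a i = 0`. -/
noncomputable def relEntropy2 (a b : ι → ℝ) : ℝ :=
  ∑ i, a i * Real.logb 2 (a i / b i)

theorem sum_mul_log_sum_div_sum_le {a b : ι → ℝ} (ha : 0 ≤ a) (hb : 0 ≤ b)
    (hab : ∀ i, b i = 0 → a i = 0) :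
    (∑ i, a i) * Real.log ((∑ i, a i) / ∑ i, b i) ≤ ∑ i, a i * Real.log (a i / b i) := by
  obtain hB | hB := (sum_nonneg fun i _ ↦ hb i : 0 ≤ ∑ i, b i).eq_or_lt
  · have hb0 (i : ι) : b i = 0 :=
      (sum_eq_zero_iff_of_nonneg fun i _ ↦ hb i).1 hB.symm i (mem_univ i)
    simp [hb0]
  have cancel (i : ι) : b i * (a i / b i) = a i := mul_div_cancel_of_imp' (hab i)
  have jensen := Real.convexOn_mul_log.map_centerMass_le (t := univ) (w := b)
    (p := fun i ↦ a i / b i) (fun i _ ↦ hb i) hB fun i _ ↦ div_nonneg (ha i) (hb i)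
  simp only [centerMass, smul_eq_mul, Function.comp_apply, ← mul_assoc, cancel] at jensen
  rw [← inv_mul_eq_div, ← mul_le_mul_iff_right₀ (inv_pos.2 hB), ← mul_assoc]
  exact jensen

theorem sum_mul_logb_sum_div_sum_le_relEntropy2 {a b : ι → ℝ} (ha : 0 ≤ a) (hb : 0 ≤ b)
    (hab : ∀ i, b i = 0 → a i = 0) :
    (∑ i, a i) * Real.logb 2 ((∑ i, a i) / ∑ i, b i) ≤ relEntropy2 a b := by
  simp only [relEntropy2, Real.logb, ← mul_div_assoc, ← sum_div]
  exact div_le_div_of_nonneg_right (sum_mul_log_sum_div_sum_le ha hb hab)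
    (Real.log_nonneg one_le_two)

theorem relEntropy2_nonneg {a b : ι → ℝ} (ha : 0 ≤ a) (hb : 0 ≤ b)
    (hab : ∀ i, b i = 0 → a i = 0) (hsum : ∑ i, a i = ∑ i, b i) : 0 ≤ relEntropy2 a b := by
  refine le_trans (le_of_eq ?_) (sum_mul_logb_sum_div_sum_le_relEntropy2 ha hb hab)
  obtain h | h := eq_or_ne (∑ i, b i) 0 <;> simp [hsum, h]

theorem relEntropy2_mul_right (a : ι → ℝ) (c : ℝ) :
    relEntropy2 a (fun i ↦ c * a i) = -(∑ i, a i) * Real.logb 2 c := by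
  rw [neg_mul, ← mul_neg, ← Real.logb_inv, sum_mul]
  refine sum_congr rfl fun i _ ↦ ?_
  obtain h | h := eq_or_ne (a i) 0
  · simp [h]
  · rw [div_mul_cancel_right₀ h]

theorem relEntropy2_self (a : ι → ℝ) : relEntropy2 a a = 0 := by
  simpa using relEntropy2_mul_right a 1

theorem relEntropy2_div_rpow (a : ι → ℝ) {b v : ι → ℝ} (hb : ∀ i, 0 < b i) (hv : ∀ i, 0 < v i)
    (ρ : ℝ) :
    relEntropy2 a (fun i ↦ b i / v i ^ ρ) =
      relEntropy2 a b + ρ * ∑ i, a i * Real.logb 2 (v i) := by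
  simp only [relEntropy2, mul_sum, ← sum_add_distrib]
  refine sum_congr rfl fun i _ ↦ ?_
  obtain h | h := eq_or_ne (a i) 0
  · simp [h]
  · have hvρ := Real.rpow_pos_of_pos (hv i) ρ
    rw [← div_mul, Real.logb_mul (div_ne_zero h (hb i).ne') hvρ.ne',
      Real.logb_rpow_eq_mul_logb_of_pos (hv i)]
    ring

theorem add_mul_logb_add_div_add_le {a a' b b' : ℝ} (ha : 0 ≤ a) (ha' : 0 ≤ a') (hb : 0 ≤ b)
    (hb' : 0 ≤ b') (hab : b = 0 → a = 0) (hab' : b' = 0 → a' = 0) :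
    (a + a') * Real.logb 2 ((a + a') / (b + b')) ≤
      a * Real.logb 2 (a / b) + a' * Real.logb 2 (a' / b') := by
  simpa [relEntropy2] using sum_mul_logb_sum_div_sum_le_relEntropy2 (a := ![a, a']) (b := ![b, b'])
    (by simp [Pi.le_def, Fin.forall_fin_two, ha, ha'])
    (by simp [Pi.le_def, Fin.forall_fin_two, hb, hb'])
    (by simpa [Fin.forall_fin_two] using ⟨hab, hab'⟩)

theorem convexOn_relEntropy2 :
    ConvexOn ℝ {p : (ι → ℝ) × (ι → ℝ) | 0 ≤ p.1 ∧ 0 ≤ p.2 ∧ ∀ i, p.2 i = 0 → p.1 i = 0}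
      (fun p ↦ relEntropy2 p.1 p.2) := by
  have scale (l a b : ℝ) :
      l * a * Real.logb 2 (l * a / (l * b)) = l * (a * Real.logb 2 (a / b)) := by
    obtain rfl | hl := eq_or_ne l 0
    · simp
    · rw [mul_div_mul_left _ _ hl, mul_assoc]
  have scale_ac {l a b : ℝ} (h : b = 0 → a = 0) : l * b = 0 → l * a = 0 := by
    simpa using Or.imp_right h
  refine ⟨fun p hp q hq l m hl hm _ ↦ ⟨?_, ?_, fun i hi ↦ ?_⟩, fun p hp q hq l m hl hm _ ↦ ?_⟩
  · exact add_nonneg (smul_nonneg hl hp.1) (smul_nonneg hm hq.1)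
  · exact add_nonneg (smul_nonneg hl hp.2.1) (smul_nonneg hm hq.2.1)
  · have hzero : l * p.2 i = 0 ∧ m * q.2 i = 0 := (add_eq_zero_iff_of_nonneg
      (mul_nonneg hl (hp.2.1 i)) (mul_nonneg hm (hq.2.1 i))).1 hi
    change l * p.1 i + m * q.1 i = 0
    rw [scale_ac (hp.2.2 i) hzero.1, scale_ac (hq.2.2 i) hzero.2, add_zero]
  · simp only [relEntropy2, smul_eq_mul, mul_sum, ← sum_add_distrib]
    refine sum_le_sum fun i _ ↦ ?_
    rw [← scale l, ← scale m]
    exact add_mul_logb_add_div_add_le (mul_nonneg hl (hp.1 i)) (mul_nonneg hm (hq.1 i))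
      (mul_nonneg hl (hp.2.1 i)) (mul_nonneg hm (hq.2.1 i)) (scale_ac (hp.2.2 i))
      (scale_ac (hq.2.2 i))

end RelativeEntropy

section Channels

variable {X Y : Type*}

/-- The set of channels from `X` to `Y`, that is, of row-stochastic matrices `Q x y = Q(y|x)`. -/
def channels (X Y : Type*) [Fintype Y] : Set (X → Y → ℝ) :=
  {Q | (∀ x y, 0 ≤ Q x y) ∧ ∀ x, ∑ y, Q x y = 1}

theorem channels_eq_pi_stdSimplex [Fintype Y] :
    channels X Y = Set.univ.pi fun _ ↦ stdSimplex ℝ Y := by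
  ext Q
  simp [channels, stdSimplex, forall_and]

theorem convex_channels [Fintype Y] : Convex ℝ (channels X Y) := by
  rw [channels_eq_pi_stdSimplex]
  exact convex_pi fun _ _ ↦ convex_stdSimplex ℝ Y

/-- The mass function `P(x) Q(y|x)` on pairs, for an input mass function `P` and a channel `Q`. -/
def jointDist (P : X → ℝ) (Q : X → Y → ℝ) : X × Y → ℝ :=
  fun p ↦ P p.1 * Q p.1 p.2

theorem jointDist_nonneg {P : X → ℝ} (hP : 0 ≤ P) {Q : X → Y → ℝ} (hQ : 0 ≤ Q) :
    0 ≤ jointDist P Q :=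
  fun p ↦ mul_nonneg (hP p.1) (hQ p.1 p.2)

theorem jointDist_smul_add_smul (P : X → ℝ) (l m : ℝ) (Q Q' : X → Y → ℝ) :
    jointDist P (l • Q + m • Q') = l • jointDist P Q + m • jointDist P Q' := by
  ext p
  simp only [jointDist, Pi.add_apply, Pi.smul_apply, smul_eq_mul]
  ring

variable [Fintype X]

/-- The output mass function `y ↦ ∑ x, P(x) Q(y|x)` of the channel `Q` under the input `P`. -/
def outputDist (P : X → ℝ) (Q : X → Y → ℝ) : Y → ℝ :=
  fun y ↦ ∑ x, P x * Q x y

theorem outputDist_nonneg {P : X → ℝ} (hP : 0 ≤ P) {Q : X → Y → ℝ} (hQ : 0 ≤ Q) :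
    0 ≤ outputDist P Q :=
  fun y ↦ sum_nonneg fun x _ ↦ jointDist_nonneg hP hQ (x, y)

theorem outputDist_smul_add_smul (P : X → ℝ) (l m : ℝ) (Q Q' : X → Y → ℝ) :
    outputDist P (l • Q + m • Q') = l • outputDist P Q + m • outputDist P Q' := by
  ext y
  simp only [outputDist, Pi.add_apply, Pi.smul_apply, smul_eq_mul, mul_sum, mul_add,
    sum_add_distrib, mul_left_comm]

theorem jointDist_eq_zero_of_outputDist_eq_zero {P : X → ℝ} (hP : 0 ≤ P) {Q : X → Y → ℝ}
    (hQ : 0 ≤ Q) {p : X × Y} (hp : outputDist P Q p.2 = 0) : jointDist P Q p = 0 :=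
  (sum_eq_zero_iff_of_nonneg fun x _ ↦ jointDist_nonneg hP hQ (x, p.2)).1 hp p.1 (mem_univ p.1)

variable [Fintype Y]

theorem sum_jointDist (P : X → ℝ) (Q : X → Y → ℝ) :
    ∑ p, jointDist P Q p = ∑ y, outputDist P Q y := by
  rw [Fintype.sum_prod_type_right]
  rfl

theorem condDiv2_eq_relEntropy2 (P : X → ℝ) (Q W : X → Y → ℝ) :
    condDiv2 P Q W = relEntropy2 (jointDist P Q) (jointDist P W) := by
  simp only [condDiv2, relEntropy2, jointDist, Fintype.sum_prod_type, mul_sum]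
  refine sum_congr rfl fun x _ ↦ sum_congr rfl fun y _ ↦ ?_
  obtain h | h := eq_or_ne (P x) 0
  · simp [h]
  · rw [mul_div_mul_left _ _ h, mul_assoc]

theorem mutInfo2_eq_relEntropy2 (P : X → ℝ) (Q : X → Y → ℝ) :
    mutInfo2 P Q = relEntropy2 (jointDist P Q) (jointDist P fun _ ↦ outputDist P Q) := by
  rw [← condDiv2_eq_relEntropy2]
  simp only [mutInfo2, condDiv2, outputDist, mul_sum, mul_assoc]

theorem convexOn_condDiv2 {P : X → ℝ} (hP : 0 ≤ P) {W : X → Y → ℝ} (hW : ∀ x y, 0 < W x y) :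
    ConvexOn ℝ (Set.Ici 0) fun Q ↦ condDiv2 P Q W := by
  refine ⟨convex_Ici 0, fun Q hQ Q' hQ' l m hl hm hlm ↦ ?_⟩
  have mem {Q : X → Y → ℝ} (hQ : 0 ≤ Q) := show (jointDist P Q, jointDist P W) ∈
      {p : (X × Y → ℝ) × (X × Y → ℝ) | 0 ≤ p.1 ∧ 0 ≤ p.2 ∧ ∀ i, p.2 i = 0 → p.1 i = 0} from
    ⟨jointDist_nonneg hP hQ, jointDist_nonneg hP fun x y ↦ (hW x y).le,
      fun p hp ↦ mul_eq_zero_of_left ((mul_eq_zero_iff_right (hW _ _).ne').1 hp) _⟩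
  have hconv := convexOn_relEntropy2.2 (mem hQ) (mem hQ') hl hm hlm
  simp only [condDiv2_eq_relEntropy2, jointDist_smul_add_smul]
  simpa [← add_smul, hlm] using hconv

theorem convexOn_mutInfo2 {P : X → ℝ} (hP : 0 ≤ P) :
    ConvexOn ℝ (Set.Ici (0 : X → Y → ℝ)) (mutInfo2 P) := by
  refine ⟨convex_Ici 0, fun Q hQ Q' hQ' l m hl hm hlm ↦ ?_⟩
  have mem {Q : X → Y → ℝ} (hQ : 0 ≤ Q) :=
    show (jointDist P Q, jointDist P fun _ ↦ outputDist P Q) ∈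
      {p : (X × Y → ℝ) × (X × Y → ℝ) | 0 ≤ p.1 ∧ 0 ≤ p.2 ∧ ∀ i, p.2 i = 0 → p.1 i = 0} from
    ⟨jointDist_nonneg hP hQ, jointDist_nonneg hP fun _ ↦ outputDist_nonneg hP hQ,
      fun p hp ↦ (mul_eq_zero.1 hp).elim (mul_eq_zero_of_left · _)
        (jointDist_eq_zero_of_outputDist_eq_zero hP hQ)⟩
  have hconv := convexOn_relEntropy2.2 (mem hQ) (mem hQ') hl hm hlm
  have hprod : (jointDist P fun _ ↦ outputDist P (l • Q + m • Q')) =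
      l • (jointDist P fun _ ↦ outputDist P Q) + m • jointDist P fun _ ↦ outputDist P Q' := by
    rw [outputDist_smul_add_smul]
    exact jointDist_smul_add_smul P l m _ _
  simp only [mutInfo2_eq_relEntropy2, hprod, jointDist_smul_add_smul]
  exact hconv

theorem relEntropy2_jointDist_mul_outputDist {P : X → ℝ} (hP : 0 ≤ P) {Q V : X → Y → ℝ}
    (hQ : Q ∈ channels X Y) (hV : ∀ x y, 0 < V x y) :
    relEntropy2 (jointDist P Q) (fun p ↦ V p.1 p.2 * outputDist P Q p.2) =
      mutInfo2 P Q - entropy2 P - ∑ x, P x * ∑ y, Q x y * Real.logb 2 (V x y) := by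
  have pointwise (x : X) (y : Y) :
      P x * Q x y * Real.logb 2 (P x * Q x y / (V x y * outputDist P Q y)) =
        P x * Q x y * Real.logb 2 (Q x y / outputDist P Q y) +
          P x * Real.logb 2 (P x) * Q x y - P x * (Q x y * Real.logb 2 (V x y)) := by
    obtain h | h := eq_or_ne (P x * Q x y) 0
    · obtain h | h := mul_eq_zero.1 h <;> simp [h]
    · have hout : outputDist P Q y ≠ 0 := fun h0 ↦
        h (jointDist_eq_zero_of_outputDist_eq_zero hP hQ.1 (p := (x, y)) h0)
      obtain ⟨hPx, hQx⟩ := mul_ne_zero_iff.1 h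
      rw [Real.logb_div h (mul_ne_zero (hV x y).ne' hout), Real.logb_div hQx hout,
        Real.logb_mul hPx hQx, Real.logb_mul (hV x y).ne' hout]
      ring
  have hentropy : ∑ x, ∑ y, P x * Real.logb 2 (P x) * Q x y = -entropy2 P := by
    simp only [← mul_sum, hQ.2, mul_one, entropy2, neg_neg]
  have hlog : ∑ x, ∑ y, P x * (Q x y * Real.logb 2 (V x y)) =
      ∑ x, P x * ∑ y, Q x y * Real.logb 2 (V x y) := by
    simp only [mul_sum]
  simp only [relEntropy2, jointDist, Fintype.sum_prod_type, pointwise, sum_sub_distrib,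
    sum_add_distrib, hentropy, hlog, ← sub_eq_add_neg]
  rfl

end Channels

section Exponent

variable {X Y : Type*} [Fintype X] [Fintype Y]

/-- The dual exponent `-∑ x, P(x) log₂ (∑ y, W(y|x) / V(x|y) ^ ρ) + ρ (H(P) - R)` of the metric `V`
on the channel `W` at rate `R`. -/
noncomputable def metricExponent (P : X → ℝ) (W V : X → Y → ℝ) (R ρ : ℝ) : ℝ :=
  -∑ x, P x * Real.logb 2 (∑ y, W x y / V x y ^ ρ) + ρ * (entropy2 P - R)

theorem condDiv2_add_mul_mutInfo2_sub_eq {P : X → ℝ} (hP : 0 ≤ P) {W Q V : X → Y → ℝ}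
    (hW : ∀ x y, 0 < W x y) (hQ : Q ∈ channels X Y) (hV : ∀ x y, 0 < V x y) (R ρ : ℝ) :
    condDiv2 P Q W + ρ * (mutInfo2 P Q - R) =
      ∑ x, P x * relEntropy2 (Q x) (fun y ↦ W x y / V x y ^ ρ) +
        ρ * relEntropy2 (jointDist P Q) (fun p ↦ V p.1 p.2 * outputDist P Q p.2) +
          ρ * (entropy2 P - R) := by
  have hdiv : ∑ x, P x * relEntropy2 (Q x) (fun y ↦ W x y / V x y ^ ρ) =
      condDiv2 P Q W + ρ * ∑ x, P x * ∑ y, Q x y * Real.logb 2 (V x y) := by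
    simp only [fun x ↦ relEntropy2_div_rpow (Q x) (hW x) (hV x) ρ, mul_add, sum_add_distrib,
      mul_sum (a := ρ), mul_left_comm ρ]
    rfl
  rw [hdiv, relEntropy2_jointDist_mul_outputDist hP hQ hV]
  ring

theorem metricExponent_le_condDiv2_add_mul {P : X → ℝ} (hP : 0 ≤ P) {W Q V : X → Y → ℝ}
    (hW : ∀ x y, 0 < W x y) (hQ : Q ∈ channels X Y) (hV : ∀ x y, 0 < V x y)
    (hVsum : ∀ y, ∑ x, V x y = 1) (R : ℝ) {ρ : ℝ} (hρ : 0 ≤ ρ) :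
    metricExponent P W V R ρ ≤ condDiv2 P Q W + ρ * (mutInfo2 P Q - R) := by
  have hdiv (x : X) : -Real.logb 2 (∑ y, W x y / V x y ^ ρ) ≤
      relEntropy2 (Q x) (fun y ↦ W x y / V x y ^ ρ) := by
    have hpos (y : Y) : 0 < W x y / V x y ^ ρ :=
      div_pos (hW x y) (Real.rpow_pos_of_pos (hV x y) ρ)
    simpa [hQ.2 x, Real.logb_inv] using sum_mul_logb_sum_div_sum_le_relEntropy2
      (hQ.1 x) (fun y ↦ (hpos y).le) fun y hy ↦ absurd hy (hpos y).ne'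
  have hpost : 0 ≤ relEntropy2 (jointDist P Q) (fun p ↦ V p.1 p.2 * outputDist P Q p.2) := by
    refine relEntropy2_nonneg (jointDist_nonneg hP hQ.1)
      (fun p ↦ mul_nonneg (hV _ _).le (outputDist_nonneg hP hQ.1 _))
      (fun p hp ↦ jointDist_eq_zero_of_outputDist_eq_zero hP hQ.1
        ((mul_eq_zero_iff_left (hV _ _).ne').1 hp)) ?_
    rw [sum_jointDist, Fintype.sum_prod_type_right]
    simp only [← sum_mul, hVsum, one_mul]
  rw [condDiv2_add_mul_mutInfo2_sub_eq hP hW hQ hV, metricExponent, ← sum_neg_distrib]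
  simp only [← mul_neg]
  gcongr
  exact (sum_le_sum fun x _ ↦ mul_le_mul_of_nonneg_left (hdiv x) (hP x)).trans
    (le_add_of_nonneg_right (mul_nonneg hρ hpost))

theorem metricExponent_le_condDiv2_add_max {P : X → ℝ} (hP : 0 ≤ P) {W Q V : X → Y → ℝ}
    (hW : ∀ x y, 0 < W x y) (hQ : Q ∈ channels X Y) (hV : ∀ x y, 0 < V x y)
    (hVsum : ∀ y, ∑ x, V x y = 1) (R : ℝ) {ρ : ℝ} (hρ : ρ ∈ Set.Icc 0 1) :
    metricExponent P W V R ρ ≤ condDiv2 P Q W + max (mutInfo2 P Q - R) 0 := by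
  refine (metricExponent_le_condDiv2_add_mul hP hW hQ hV hVsum R hρ.1).trans ?_
  gcongr
  calc ρ * (mutInfo2 P Q - R) ≤ ρ * max (mutInfo2 P Q - R) 0 :=
        mul_le_mul_of_nonneg_left (le_max_left _ _) hρ.1
    _ ≤ max (mutInfo2 P Q - R) 0 := mul_le_of_le_one_left (le_max_right _ _) hρ.2

theorem metricExponent_eq_condDiv2_add_mul {P : X → ℝ} (hP : 0 ≤ P) {W Q V : X → Y → ℝ}
    (hW : ∀ x y, 0 < W x y) (hQ : Q ∈ channels X Y) (hV : ∀ x y, 0 < V x y) (R ρ : ℝ) {c : X → ℝ}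
    (htilt : ∀ x y, W x y / V x y ^ ρ = c x * Q x y)
    (hpost : ∀ x y, P x * Q x y = V x y * outputDist P Q y) :
    metricExponent P W V R ρ = condDiv2 P Q W + ρ * (mutInfo2 P Q - R) := by
  have hjoint : (fun p : X × Y ↦ V p.1 p.2 * outputDist P Q p.2) = jointDist P Q :=
    funext fun p ↦ (hpost p.1 p.2).symm
  rw [condDiv2_add_mul_mutInfo2_sub_eq hP hW hQ hV, hjoint, relEntropy2_self, mul_zero, add_zero]
  simp [metricExponent, htilt, relEntropy2_mul_right, ← mul_sum, hQ.2]

theorem exists_forall_le_condDiv2_add_mul {P : X → ℝ} (hP : 0 ≤ P) {W : X → Y → ℝ}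
    (hW : ∀ x y, 0 < W x y) {R v : ℝ}
    (hv : ∀ Q ∈ channels X Y, v ≤ condDiv2 P Q W + max (mutInfo2 P Q - R) 0) :
    ∃ ρ ∈ Set.Icc (0 : ℝ) 1, ∀ Q ∈ channels X Y,
      v ≤ condDiv2 P Q W + ρ * (mutInfo2 P Q - R) := by
  have hsubset : channels X Y ⊆ Set.Ici 0 := fun Q hQ ↦ hQ.1
  have hD := (convexOn_condDiv2 hP hW).subset hsubset convex_channels
  have hI := ((convexOn_mutInfo2 hP).subset hsubset convex_channels).add_const (-R)
  have hcases (Q : X → Y → ℝ) (hQ : Q ∈ channels X Y) :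
      ∃ i, v ≤ ![fun Q ↦ condDiv2 P Q W, fun Q ↦ condDiv2 P Q W + (mutInfo2 P Q - R)] i Q := by
    obtain h | h := le_total (mutInfo2 P Q - R) 0
    · exact ⟨0, by simpa [max_eq_right h] using hv Q hQ⟩
    · exact ⟨1, by simpa [max_eq_left h] using hv Q hQ⟩
  obtain ⟨w, hw, hle⟩ := exists_mem_stdSimplex_forall_le_sum_mul (v := v)
    (f := ![fun Q ↦ condDiv2 P Q W, fun Q ↦ condDiv2 P Q W + (mutInfo2 P Q - R)])
    (Fin.forall_fin_two.2 ⟨hD, hD.add hI⟩) hcases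
  have hwsum : w 0 + w 1 = 1 := by simpa using hw.2
  refine ⟨w 1, ⟨hw.1 1, by linarith [hw.1 0]⟩, fun Q hQ ↦ (hle Q hQ).trans_eq ?_⟩
  simp only [Fin.sum_univ_two, Matrix.cons_val_zero, Matrix.cons_val_one]
  linear_combination condDiv2 P Q W * hwsum

end Exponent

section OptimalMetric

variable {X Y : Type*} [Fintype X] {P : X → ℝ} {W : X → Y → ℝ} {Z : X → ℝ}

/-- The denominator `∑ x', P(x') W(y|x') ^ (1 / (1 + ρ)) / Z(x')` of the metric `U(·|y, ρ)`. -/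
noncomputable def tiltedSum (P : X → ℝ) (W : X → Y → ℝ) (Z : X → ℝ) (ρ : ℝ) (y : Y) : ℝ :=
  ∑ x, P x * W x y ^ (1 / (1 + ρ)) / Z x

/-- The optimal test channel for the metric `U(·|·, ρ)`: its posterior is `U(x|y, ρ)`, and its rows
sum to `1` exactly when `Z` solves the fixed point equation. -/
noncomputable def optChannel (P : X → ℝ) (W : X → Y → ℝ) (Z : X → ℝ) (ρ : ℝ) (x : X) (y : Y) : ℝ :=
  W x y ^ (1 / (1 + ρ)) * tiltedSum P W Z ρ y ^ ρ / Z x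

theorem outputDist_optChannel (P : X → ℝ) (W : X → Y → ℝ) (Z : X → ℝ) (ρ : ℝ) (y : Y) :
    outputDist P (optChannel P W Z ρ) y = tiltedSum P W Z ρ y * tiltedSum P W Z ρ y ^ ρ := by
  nth_rw 1 [tiltedSum]
  rw [sum_mul]
  refine sum_congr rfl fun x _ ↦ ?_
  rw [optChannel]
  ring

theorem tiltedSum_pos [Nonempty X] (hP : ∀ x, 0 < P x) (hW : ∀ x y, 0 < W x y)
    (hZ : ∀ x, 0 < Z x) (ρ : ℝ) (y : Y) : 0 < tiltedSum P W Z ρ y :=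
  sum_pos (fun x _ ↦ div_pos (mul_pos (hP x) (Real.rpow_pos_of_pos (hW x y) _)) (hZ x))
    univ_nonempty

theorem Uopt_pos [Nonempty X] (hP : ∀ x, 0 < P x) (hW : ∀ x y, 0 < W x y) (hZ : ∀ x, 0 < Z x)
    (ρ : ℝ) (x : X) (y : Y) : 0 < Uopt P W Z ρ x y :=
  div_pos (div_pos (mul_pos (hP x) (Real.rpow_pos_of_pos (hW x y) _)) (hZ x))
    (tiltedSum_pos hP hW hZ ρ y)

theorem sum_Uopt [Nonempty X] (hP : ∀ x, 0 < P x) (hW : ∀ x y, 0 < W x y) (hZ : ∀ x, 0 < Z x)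
    (ρ : ℝ) (y : Y) : ∑ x, Uopt P W Z ρ x y = 1 := by
  simp only [Uopt, ← sum_div]
  exact div_self (tiltedSum_pos hP hW hZ ρ y).ne'

theorem mul_optChannel_eq_Uopt_mul_outputDist [Nonempty X] (hP : ∀ x, 0 < P x)
    (hW : ∀ x y, 0 < W x y) (hZ : ∀ x, 0 < Z x) (ρ : ℝ) (x : X) (y : Y) :
    P x * optChannel P W Z ρ x y = Uopt P W Z ρ x y * outputDist P (optChannel P W Z ρ) y := by
  have hS := (tiltedSum_pos hP hW hZ ρ y).ne'
  rw [outputDist_optChannel, Uopt, ← tiltedSum, optChannel]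
  field_simp

theorem div_Uopt_rpow_eq_mul_optChannel [Nonempty X] (hP : ∀ x, 0 < P x) (hW : ∀ x y, 0 < W x y)
    (hZ : ∀ x, 0 < Z x) {ρ : ℝ} (hρ : 1 + ρ ≠ 0) (x : X) (y : Y) :
    W x y / Uopt P W Z ρ x y ^ ρ = Z x ^ ρ * Z x / P x ^ ρ * optChannel P W Z ρ x y := by
  have hS := tiltedSum_pos hP hW hZ ρ y
  rw [Uopt, ← tiltedSum, optChannel]
  set t := W x y ^ (1 / (1 + ρ))
  have ht : 0 < t := Real.rpow_pos_of_pos (hW x y) _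
  have hWt : W x y = t * t ^ ρ := by
    rw [← Real.rpow_one_add' ht.le hρ, ← Real.rpow_mul (hW x y).le, one_div_mul_cancel hρ,
      Real.rpow_one]
  have hPx := hP x
  have hZx := hZ x
  rw [hWt, Real.div_rpow (by positivity) hS.le, Real.div_rpow (by positivity) hZx.le,
    Real.mul_rpow hPx.le ht.le]
  field_simp

variable [Fintype Y]

theorem optChannel_mem_channels [Nonempty X] (hP : ∀ x, 0 < P x) (hW : ∀ x y, 0 < W x y)
    (hZ : ∀ x, 0 < Z x) {ρ : ℝ}
    (hfix : ∀ x, Z x = ∑ y, W x y ^ (1 / (1 + ρ)) * tiltedSum P W Z ρ y ^ ρ) :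
    optChannel P W Z ρ ∈ channels X Y := by
  refine ⟨fun x y ↦ ?_, fun x ↦ ?_⟩
  · have hS := tiltedSum_pos hP hW hZ ρ y
    have hWxy := hW x y
    have hZx := hZ x
    unfold optChannel
    positivity
  · simp only [optChannel, ← sum_div, ← hfix, div_self (hZ x).ne']

theorem metricExponent_Uopt_eq [Nonempty X] (hP : ∀ x, 0 < P x) (hW : ∀ x y, 0 < W x y)
    (hZ : ∀ x, 0 < Z x) {ρ : ℝ} (hρ : 1 + ρ ≠ 0)
    (hfix : ∀ x, Z x = ∑ y, W x y ^ (1 / (1 + ρ)) * tiltedSum P W Z ρ y ^ ρ) (R : ℝ) :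
    metricExponent P W (Uopt P W Z ρ) R ρ =
      condDiv2 P (optChannel P W Z ρ) W + ρ * (mutInfo2 P (optChannel P W Z ρ) - R) :=
  metricExponent_eq_condDiv2_add_mul (fun x ↦ (hP x).le) hW
    (optChannel_mem_channels hP hW hZ hfix) (Uopt_pos hP hW hZ ρ) R ρ
    (div_Uopt_rpow_eq_mul_optChannel hP hW hZ hρ)
    (mul_optChannel_eq_Uopt_mul_outputDist hP hW hZ ρ)

theorem exists_le_metricExponent_Uopt [Nonempty X] (hP : ∀ x, 0 < P x) (hW : ∀ x y, 0 < W x y)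
    {Z : ℝ → X → ℝ} (hZ : ∀ ρ ∈ Set.Icc (0 : ℝ) 1, ∀ x, 0 < Z ρ x)
    (hfix : ∀ ρ ∈ Set.Icc (0 : ℝ) 1, ∀ x,
      Z ρ x = ∑ y, W x y ^ (1 / (1 + ρ)) * tiltedSum P W (Z ρ) ρ y ^ ρ) {R v : ℝ}
    (hv : ∀ Q ∈ channels X Y, v ≤ condDiv2 P Q W + max (mutInfo2 P Q - R) 0) :
    ∃ ρ ∈ Set.Icc (0 : ℝ) 1, v ≤ metricExponent P W (Uopt P W (Z ρ) ρ) R ρ := by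
  obtain ⟨ρ, hρ, hle⟩ := exists_forall_le_condDiv2_add_mul (fun x ↦ (hP x).le) hW hv
  have hρ' : 1 + ρ ≠ 0 := (add_pos_of_pos_of_nonneg one_pos hρ.1).ne'
  refine ⟨ρ, hρ, ?_⟩
  rw [metricExponent_Uopt_eq hP hW (hZ ρ hρ) hρ' (hfix ρ hρ)]
  exact hle _ (optChannel_mem_channels hP hW (hZ ρ hρ) (hfix ρ hρ))

end OptimalMetric

section PowerNormalization

variable {X Y : Type*} [Fintype X] {U : X → Y → ℝ}

theorem Utheta_pos [Nonempty X] (hU : ∀ x y, 0 < U x y) (θ : ℝ) (x : X) (y : Y) :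
    0 < Utheta U θ x y :=
  div_pos (Real.rpow_pos_of_pos (hU x y) θ)
    (sum_pos (fun x' _ ↦ Real.rpow_pos_of_pos (hU x' y) θ) univ_nonempty)

theorem sum_Utheta [Nonempty X] (hU : ∀ x y, 0 < U x y) (θ : ℝ) (y : Y) :
    ∑ x, Utheta U θ x y = 1 := by
  simp only [Utheta, ← sum_div]
  exact div_self (sum_pos (fun x _ ↦ Real.rpow_pos_of_pos (hU x y) θ) univ_nonempty).ne'

theorem Utheta_one (hU : ∀ y, ∑ x, U x y = 1) : Utheta U 1 = U := by
  ext x y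
  simp only [Utheta, Real.rpow_one, hU, div_one]

variable [Fintype Y] [Nonempty X] {P : X → ℝ} {W Q : X → Y → ℝ}

/-- The exponent at `ρ` of the decoding metric `U`: the best `metricExponent` over all powers
`θ ≥ 0` of `U`, each normalized to `Utheta U θ`. -/
noncomputable def thetaExponent (P : X → ℝ) (W U : X → Y → ℝ) (R ρ : ℝ) : ℝ :=
  ⨆ θ : Set.Ici (0 : ℝ), metricExponent P W (Utheta U θ) R ρ

theorem thetaExponent_le (hP : 0 ≤ P) (hW : ∀ x y, 0 < W x y) (hQ : Q ∈ channels X Y)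
    (hU : ∀ x y, 0 < U x y) (R : ℝ) {ρ : ℝ} (hρ : ρ ∈ Set.Icc 0 1) :
    thetaExponent P W U R ρ ≤ condDiv2 P Q W + max (mutInfo2 P Q - R) 0 :=
  ciSup_le fun θ ↦ metricExponent_le_condDiv2_add_max hP hW hQ (Utheta_pos hU θ)
    (sum_Utheta hU θ) R hρ

theorem metricExponent_le_thetaExponent (hP : 0 ≤ P) (hW : ∀ x y, 0 < W x y)
    (hQ : Q ∈ channels X Y) (hU : ∀ x y, 0 < U x y) (hUsum : ∀ y, ∑ x, U x y = 1) (R : ℝ)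
    {ρ : ℝ} (hρ : ρ ∈ Set.Icc 0 1) :
    metricExponent P W U R ρ ≤ thetaExponent P W U R ρ := by
  have hbdd : BddAbove (Set.range fun θ : Set.Ici (0 : ℝ) ↦
      metricExponent P W (Utheta U θ) R ρ) :=
    ⟨_, Set.forall_mem_range.2 fun θ ↦ metricExponent_le_condDiv2_add_max hP hW hQ
      (Utheta_pos hU θ) (sum_Utheta hU θ) R hρ⟩
  have hle := le_ciSup hbdd ⟨1, Set.mem_Ici.2 zero_le_one⟩
  rwa [Utheta_one hUsum] at hle

end PowerNormalization

/-- If for every `ρ ∈ [0,1]` there is a positive solution `Z_ρ` of the fixed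
point equations, then the metric `U_* = U(·|·,ρ*)`, where `ρ*` maximizes the resulting
exponent, achieves the random coding error exponent of constant composition codes:
`max_{ρ∈[0,1]} sup_{θ≥0} { −Σ_x P_X(x) log₂( Σ_y W(y|x)/U_θ(x|y,ρ*)^ρ ) + ρ(H(P_X) − R) }
  = min_Q { D(Q‖W|P_X) + [I_Q(X;Y) − R]_+ }`. -/
theorem optimal_metric_achieves_cc_exponent
    {X Y : Type*} [Fintype X] [Fintype Y] [Nonempty X] [Nonempty Y]
    (P : X → ℝ) (hP0 : ∀ x, 0 < P x) (hP1 : ∑ x, P x = 1)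
    (W : X → Y → ℝ) (hW : ∀ x y, 0 < W x y) (hWsum : ∀ x, ∑ y, W x y = 1)
    (R : ℝ)
    (Z : ℝ → X → ℝ) (hZpos : ∀ ρ ∈ Set.Icc (0:ℝ) 1, ∀ x, 0 < Z ρ x)
    (hZfix : ∀ ρ ∈ Set.Icc (0:ℝ) 1, ∀ x,
      Z ρ x = ∑ y, W x y ^ (1 / (1 + ρ)) *
        (∑ x', P x' * W x' y ^ (1 / (1 + ρ)) / Z ρ x') ^ ρ)
    (ρstar : ℝ) (hρstar : ρstar ∈ Set.Icc (0:ℝ) 1)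
    (hmax : ∀ ρ ∈ Set.Icc (0:ℝ) 1,
      (⨆ θ : Set.Ici (0:ℝ),
        (-∑ x, P x * Real.logb 2
            (∑ y, W x y / Utheta (fun x y => Uopt P W (Z ρ) ρ x y) θ.1 x y ^ ρ)
          + ρ * (entropy2 P - R))) ≤
      ⨆ θ : Set.Ici (0:ℝ),
        (-∑ x, P x * Real.logb 2
            (∑ y, W x y / Utheta (fun x y => Uopt P W (Z ρstar) ρstar x y) θ.1 x y ^ ρstar)
          + ρstar * (entropy2 P - R))) :
    (⨆ ρ : Set.Icc (0:ℝ) 1, ⨆ θ : Set.Ici (0:ℝ),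
        (-∑ x, P x * Real.logb 2
            (∑ y, W x y / Utheta (fun x y => Uopt P W (Z ρstar) ρstar x y) θ.1 x y ^ (ρ.1 : ℝ))
          + ρ.1 * (entropy2 P - R))) =
      ⨅ Q : {Q : X → Y → ℝ // (∀ x y, 0 ≤ Q x y) ∧ ∀ x, ∑ y, Q x y = 1},
        condDiv2 P Q.1 W + max (mutInfo2 P Q.1 - R) 0 := by
  have hP : 0 ≤ P := fun x ↦ (hP0 x).le
  have hWmem : W ∈ channels X Y := ⟨fun x y ↦ (hW x y).le, hWsum⟩
  have hUpos (ρ : ℝ) (hρ : ρ ∈ Set.Icc (0 : ℝ) 1) := Uopt_pos hP0 hW (hZpos ρ hρ) ρ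
  have hupper (Q : X → Y → ℝ) (hQ : Q ∈ channels X Y) (ρ : Set.Icc (0 : ℝ) 1) :=
    thetaExponent_le hP hW hQ (hUpos ρstar hρstar) R ρ.2
  set exponent := fun Q : {Q : X → Y → ℝ // (∀ x y, 0 ≤ Q x y) ∧ ∀ x, ∑ y, Q x y = 1} ↦
    condDiv2 P Q.1 W + max (mutInfo2 P Q.1 - R) 0
  have : Nonempty {Q : X → Y → ℝ // (∀ x y, 0 ≤ Q x y) ∧ ∀ x, ∑ y, Q x y = 1} := ⟨⟨W, hWmem⟩⟩
  refine le_antisymm (le_ciInf fun Q ↦ ciSup_le (hupper Q.1 Q.2)) ?_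
  have hbdd : BddBelow (Set.range exponent) :=
    ⟨_, Set.forall_mem_range.2 fun Q ↦ hupper Q.1 Q.2 ⟨ρstar, hρstar⟩⟩
  obtain ⟨ρ, hρ, hle⟩ := exists_le_metricExponent_Uopt hP0 hW hZpos hZfix
    fun Q hQ ↦ ciInf_le hbdd ⟨Q, hQ⟩
  calc _ ≤ metricExponent P W (Uopt P W (Z ρ) ρ) R ρ := hle
    _ ≤ thetaExponent P W (Uopt P W (Z ρ) ρ) R ρ :=
      metricExponent_le_thetaExponent hP hW hWmem (hUpos ρ hρ)
        (sum_Uopt hP0 hW (hZpos ρ hρ) ρ) R hρ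
    _ ≤ thetaExponent P W (Uopt P W (Z ρstar) ρstar) R ρstar := hmax ρ hρ
    _ ≤ _ := le_ciSup ⟨_, Set.forall_mem_range.2 (hupper W hWmem)⟩
      (⟨ρstar, hρstar⟩ : Set.Icc (0 : ℝ) 1)
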